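/- Let 1 ≤ p < ∞, let T : 𝒱(ℝⁿ) → 𝒱(ℝⁿ) be a rearrangement, and let 𝒲 be a family of rearrangements from 𝒱(ℝⁿ) to 𝒱(ℝⁿ). The following are equivalent: (i) T is approximable in Lᵖ on L^p_+(ℝⁿ) by maps in 𝒲; (ii) the induced set map ∂_T is approximable on 𝓛ⁿ by maps in {∂_W : W ∈ 𝒲}; (iii) ∂_T is approximable on 𝒞ⁿ by maps in {∂_W : W ∈ 𝒲}. The equivalence remains true with 'approximable' replaced throughout by 'sequentially approximable'; moreover (i) ⇒ (ii) ⇔ (iii) holds with 'approximable' replaced throughout by 'weakly approximable'. -/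

import Mathlib

open MeasureTheory Metric Filter Topology
open scoped ENNReal

noncomputable section

abbrev Euc (n : ℕ) : Type := EuclideanSpace ℝ (Fin n)

/-- Membership in `𝒱(ℝⁿ)`: nonnegative measurable functions vanishing at infinity. -/
def inV {n : ℕ} (f : Euc n → ℝ) : Prop :=
  Measurable f ∧ 0 ≤ f ∧ ∀ t : ℝ, 0 < t → volume {x | t < f x} ≠ ⊤

/-- A rearrangement: a map of `𝒱(ℝⁿ)` to itself that is equimeasurable and monotonic. -/
def IsRearrangement {n : ℕ} (T : (Euc n → ℝ) → Euc n → ℝ) : Prop :=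
  (∀ f, inV f → inV (T f)) ∧
  (∀ f, inV f → ∀ t : ℝ, volume {x | t < T f x} = volume {x | t < f x}) ∧
  (∀ f g, inV f → inV g → (∀ᵐ x ∂volume, f x ≤ g x) →
    ∀ᵐ x ∂volume, T f x ≤ T g x)

/-- Membership in `L^p_+(ℝⁿ)`. -/
def inLpPlus {n : ℕ} (p : ℝ≥0∞) (f : Euc n → ℝ) : Prop :=
  Measurable f ∧ 0 ≤ f ∧ eLpNorm f p volume ≠ ⊤

/-- Membership in `𝓛ⁿ`: measurable sets of finite measure. -/
def memLn {n : ℕ} (A : Set (Euc n)) : Prop := MeasurableSet A ∧ volume A ≠ ⊤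

/-- Membership in `𝒞ⁿ`: nonempty compact sets. -/
def memCn {n : ℕ} (A : Set (Euc n)) : Prop := IsCompact A ∧ A.Nonempty

/-- The symmetric difference of two sets. -/
def sd {n : ℕ} (A B : Set (Euc n)) : Set (Euc n) := (A \ B) ∪ (B \ A)

/-- The set map induced by `T`: `∂_T A = {x : T 1_A (x) = 1}`. -/
def indMap {n : ℕ} (T : (Euc n → ℝ) → Euc n → ℝ) (A : Set (Euc n)) : Set (Euc n) :=
  {x | T (A.indicator fun _ => (1 : ℝ)) x = 1}

/-- `S k ∘ ⋯ ∘ S 0`, the composition of the first `k + 1` maps of a sequence. -/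
def seqComp {α : Type*} (S : ℕ → α → α) : ℕ → α → α
  | 0 => S 0
  | k + 1 => S (k + 1) ∘ seqComp S k

abbrev ind {n : ℕ} (c : ℝ) (A : Set (Euc n)) : Euc n → ℝ := A.indicator fun _ => c

lemma ind_inV {n : ℕ} {A : Set (Euc n)} (hA : memLn A) {c : ℝ} (hc : 0 < c) : inV (ind c A) := by
  refine ⟨measurable_const.indicator hA.1, fun x => Set.indicator_nonneg (fun _ _ => hc.le) x, ?_⟩
  intro t ht
  refine ((measure_mono ?_).trans_lt hA.2.lt_top).ne
  intro x hx
  by_contra h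
  simp only [Set.mem_ofPred_eq, ind, Set.indicator_of_notMem h] at hx
  linarith

lemma ind_level {n : ℕ} {A : Set (Euc n)} {c t : ℝ} (h0 : 0 ≤ t) (hc : t < c) :
    {x | t < ind c A x} = A := by
  ext x
  by_cases h : x ∈ A
  · simp [ind, h, hc]
  · simp [ind, h, h0]

lemma two_val {n : ℕ} {T : (Euc n → ℝ) → Euc n → ℝ} (hT : IsRearrangement T)
    {A : Set (Euc n)} (hA : memLn A) {c : ℝ} (hc : 0 < c) :
    ∀ᵐ x ∂(volume : Measure (Euc n)), T (ind c A) x = 0 ∨ T (ind c A) x = c := by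
  have hV := ind_inV hA hc
  obtain ⟨hm, h0, -⟩ := hT.1 _ hV
  have hle : ∀ᵐ x ∂(volume : Measure (Euc n)), T (ind c A) x ≤ c := by
    have : volume {x | c < T (ind c A) x} = 0 := by
      rw [hT.2.1 _ hV]
      convert measure_empty (μ := (volume : Measure (Euc n)))
      ext x
      by_cases h : x ∈ A <;> simp [ind, h, hc.le]
    rw [ae_iff]
    simpa using this
  have hn : ∀ k : ℕ, ∀ᵐ x ∂(volume : Measure (Euc n)),
      ¬ (0 < T (ind c A) x ∧ T (ind c A) x ≤ c - c / (k + 1)) := by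
    intro k
    have hk : (0:ℝ) < k + 1 := by positivity
    have hs0 : 0 ≤ c - c / (k + 1) := by
      have : c / (k + 1) ≤ c := div_le_self hc.le (by linarith)
      linarith
    have hs1 : c - c / (k + 1) < c := by
      have : 0 < c / (k + 1) := by positivity
      linarith
    have e1 : volume {x | 0 < T (ind c A) x} = volume A := by
      rw [hT.2.1 _ hV, ind_level le_rfl hc]
    have e2 : volume {x | c - c / (k + 1) < T (ind c A) x} = volume A := by
      rw [hT.2.1 _ hV, ind_level hs0 hs1]
    have hd := measure_sdiff (μ := (volume : Measure (Euc n)))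
      (s₁ := {x | 0 < T (ind c A) x}) (s₂ := {x | c - c / (k + 1) < T (ind c A) x})
      (fun x hx => lt_of_le_of_lt hs0 hx)
      (measurableSet_lt measurable_const hm).nullMeasurableSet (by rw [e2]; exact hA.2)
    rw [e1, e2, tsub_self] at hd
    rw [ae_iff]
    simp only [not_not]
    convert hd using 2
    ext x; simp
  filter_upwards [hle, ae_all_iff.2 hn] with x h1 h2
  rcases (h0 x).eq_or_lt with h | h
  · left; exact h.symm
  · right
    by_contra hne
    have hlt : T (ind c A) x < c := lt_of_le_of_ne h1 hne
    obtain ⟨k, hk⟩ := exists_nat_gt (c / (c - T (ind c A) x))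
    refine h2 k ⟨h, ?_⟩
    have hpos : 0 < c - T (ind c A) x := by linarith
    rw [div_lt_iff₀ hpos] at hk
    have : c / (k + 1) ≤ c - T (ind c A) x := by
      rw [div_le_iff₀ (by positivity)]
      nlinarith
    linarith

lemma indMap_meas {n : ℕ} {T : (Euc n → ℝ) → Euc n → ℝ} (hT : IsRearrangement T)
    {A : Set (Euc n)} (hA : memLn A) : MeasurableSet (indMap T A) :=
  (hT.1 _ (ind_inV hA one_pos)).1 (measurableSet_singleton 1)

lemma indMap_ae_pos {n : ℕ} {T : (Euc n → ℝ) → Euc n → ℝ} (hT : IsRearrangement T)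
    {A : Set (Euc n)} (hA : memLn A) :
    indMap T A =ᵐ[volume] ({x | 0 < T (ind 1 A) x} : Set (Euc n)) := by
  filter_upwards [two_val hT hA one_pos] with x hx
  apply propext
  change T (ind 1 A) x = 1 ↔ 0 < T (ind 1 A) x
  rcases hx with h | h <;> rw [h] <;> norm_num

lemma vol_pos {n : ℕ} {T : (Euc n → ℝ) → Euc n → ℝ} (hT : IsRearrangement T)
    {A : Set (Euc n)} (hA : memLn A) {c : ℝ} (hc : 0 < c) :
    volume {x | 0 < T (ind c A) x} = volume A := by
  rw [hT.2.1 _ (ind_inV hA hc), ind_level le_rfl hc]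

lemma indMap_vol {n : ℕ} {T : (Euc n → ℝ) → Euc n → ℝ} (hT : IsRearrangement T)
    {A : Set (Euc n)} (hA : memLn A) : volume (indMap T A) = volume A := by
  rw [measure_congr (indMap_ae_pos hT hA), vol_pos hT hA one_pos]

lemma indMap_memLn {n : ℕ} {T : (Euc n → ℝ) → Euc n → ℝ} (hT : IsRearrangement T)
    {A : Set (Euc n)} (hA : memLn A) : memLn (indMap T A) :=
  ⟨indMap_meas hT hA, by rw [indMap_vol hT hA]; exact hA.2⟩

lemma ind_ae {n : ℕ} {T : (Euc n → ℝ) → Euc n → ℝ} (hT : IsRearrangement T)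
    {A : Set (Euc n)} (hA : memLn A) :
    T (ind 1 A) =ᵐ[volume] ind 1 (indMap T A) := by
  filter_upwards [two_val hT hA one_pos] with x hx
  by_cases h : x ∈ indMap T A
  · simp only [ind, Set.indicator_of_mem h]; exact h
  · simp only [ind, Set.indicator_of_notMem h]
    exact hx.resolve_right h

lemma pos_mono {n : ℕ} {T : (Euc n → ℝ) → Euc n → ℝ} (hT : IsRearrangement T)
    {f g : Euc n → ℝ} (hf : inV f) (hg : inV g) (h : ∀ᵐ x ∂(volume : Measure (Euc n)), f x ≤ g x) :
    ({x | 0 < T f x} : Set (Euc n)) ≤ᵐ[volume] ({x | 0 < T g x} : Set (Euc n)) := by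
  filter_upwards [hT.2.2 f g hf hg h] with x hx h0
  exact lt_of_lt_of_le h0 hx

lemma indMap_mono {n : ℕ} {T : (Euc n → ℝ) → Euc n → ℝ} (hT : IsRearrangement T)
    {A B : Set (Euc n)} (hA : memLn A) (hB : memLn B) (h : A ≤ᵐ[volume] B) :
    indMap T A ≤ᵐ[volume] indMap T B := by
  refine (indMap_ae_pos hT hA).le.trans (EventuallyLE.trans ?_ (indMap_ae_pos hT hB).symm.le)
  refine pos_mono hT (ind_inV hA one_pos) (ind_inV hB one_pos) ?_
  filter_upwards [h] with x hx
  by_cases h : x ∈ A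
  · have : x ∈ B := hx h
    simp [ind, h, this]
  · simp only [ind, Set.indicator_of_notMem h]
    exact Set.indicator_nonneg (fun _ _ => zero_le_one) x

lemma indMap_congr {n : ℕ} {T : (Euc n → ℝ) → Euc n → ℝ} (hT : IsRearrangement T)
    {A B : Set (Euc n)} (hA : memLn A) (hB : memLn B) (h : A =ᵐ[volume] B) :
    indMap T A =ᵐ[volume] indMap T B :=
  (indMap_mono hT hA hB h.le).antisymm (indMap_mono hT hB hA h.symm.le)

/-- scaling -/
lemma indMap_scale {n : ℕ} {T : (Euc n → ℝ) → Euc n → ℝ} (hT : IsRearrangement T)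
    {A : Set (Euc n)} (hA : memLn A) {c : ℝ} (hc : 0 < c) :
    indMap T A =ᵐ[volume] ({x | 0 < T (ind c A) x} : Set (Euc n)) := by
  refine (indMap_ae_pos hT hA).trans ?_
  have key : ∀ a b : ℝ, 0 < a → 0 < b → a ≤ b →
      ({x | 0 < T (ind a A) x} : Set (Euc n)) =ᵐ[volume] ({x | 0 < T (ind b A) x} : Set (Euc n)) := by
    intro a b ha hb hab
    have hm := (hT.1 _ (ind_inV hA ha)).1
    refine ae_eq_of_ae_subset_of_measure_ge
      (pos_mono hT (ind_inV hA ha) (ind_inV hA hb) (ae_of_all _ fun x => ?_)) ?_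
      (measurableSet_lt measurable_const hm).nullMeasurableSet ?_
    · by_cases h : x ∈ A <;> simp [ind, h, hab]
    · rw [vol_pos hT hA ha, vol_pos hT hA hb]
    · rw [vol_pos hT hA hb]; exact hA.2
  rcases le_total 1 c with h | h
  · exact key 1 c one_pos hc h
  · exact (key c 1 hc one_pos h).symm

lemma level_memLn {n : ℕ} {f : Euc n → ℝ} (hf : inV f) {t : ℝ} (ht : 0 < t) :
    memLn {x | t < f x} := ⟨measurableSet_lt measurable_const hf.1, hf.2.2 t ht⟩

lemma indMap_level_le {n : ℕ} {T : (Euc n → ℝ) → Euc n → ℝ} (hT : IsRearrangement T)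
    {f : Euc n → ℝ} (hf : inV f) {s : ℝ} (hs : 0 < s) :
    ∀ᵐ x ∂(volume : Measure (Euc n)), x ∈ indMap T {x | s < f x} → s ≤ T f x := by
  have hA := level_memLn hf hs
  have hle := hT.2.2 _ f (ind_inV hA hs) hf (ae_of_all _ fun x => by
    by_cases h : x ∈ {x | s < f x}
    · simp only [ind, Set.indicator_of_mem h]; exact le_of_lt h
    · simp only [ind, Set.indicator_of_notMem h]; exact hf.2.1 x)
  filter_upwards [two_val hT hA hs, indMap_scale hT hA hs, hle] with x h1 h2 h3 hx
  have h4 : 0 < T (ind s {x | s < f x}) x := h2.mp hx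
  rcases h1 with h | h
  · linarith
  · linarith

lemma indMap_level {n : ℕ} {T : (Euc n → ℝ) → Euc n → ℝ} (hT : IsRearrangement T)
    {f : Euc n → ℝ} (hf : inV f) {t : ℝ} (ht : 0 < t) :
    indMap T {x | t < f x} =ᵐ[volume] ({x | t < T f x} : Set (Euc n)) := by
  set s : ℕ → ℝ := fun k => t + 1 / ((k : ℝ) + 1) with hs
  have hts : ∀ k, t < s k := fun k => by
    have : (0:ℝ) < 1 / ((k : ℝ) + 1) := by positivity
    simp only [hs]; linarith
  have hs0 : ∀ k, 0 < s k := fun k => ht.trans (hts k)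
  set U : Set (Euc n) := ⋃ k, indMap T {x | s k < f x} with hU
  have hUm : MeasurableSet U :=
    MeasurableSet.iUnion fun k => indMap_meas hT (level_memLn hf (hs0 k))
  have hmono : Monotone fun k => {x | s k < f x} := by
    intro i j hij x hx
    have : s j ≤ s i := by
      simp only [hs]
      gcongr
    exact lt_of_le_of_lt this hx
  have hun : (⋃ k, {x | s k < f x}) = {x | t < f x} := by
    ext x
    simp only [Set.mem_iUnion, Set.mem_ofPred_eq]
    constructor
    · rintro ⟨k, hk⟩; exact (hts k).trans hk
    · intro h
      obtain ⟨k, hk⟩ := exists_nat_one_div_lt (sub_pos.2 h)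
      exact ⟨k, by simp only [hs]; linarith⟩
  have hvU : volume {x | t < f x} ≤ volume U := by
    rw [← hun, hmono.measure_iUnion]
    refine iSup_le fun k => ?_
    rw [← indMap_vol hT (level_memLn hf (hs0 k))]
    exact measure_mono (Set.subset_iUnion (fun k => indMap T {x | s k < f x}) k)
  have h1 : U =ᵐ[volume] ({x | t < T f x} : Set (Euc n)) := by
    refine ae_eq_of_ae_subset_of_measure_ge ?_ ?_ hUm.nullMeasurableSet ?_
    · filter_upwards [ae_all_iff.2 fun k => indMap_level_le hT hf (hs0 k)] with x hx hxU
      obtain ⟨k, hk⟩ := Set.mem_iUnion.1 hxU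
      exact lt_of_lt_of_le (hts k) (hx k hk)
    · rw [hT.2.1 f hf]; exact hvU
    · rw [hT.2.1 f hf]; exact hf.2.2 t ht
  have h2 : U =ᵐ[volume] indMap T {x | t < f x} := by
    refine ae_eq_of_ae_subset_of_measure_ge ?_ ?_ hUm.nullMeasurableSet ?_
    · have : ∀ k, indMap T {x | s k < f x} ≤ᵐ[volume] indMap T {x | t < f x} := fun k =>
        indMap_mono hT (level_memLn hf (hs0 k)) (level_memLn hf ht)
          (Eventually.of_forall fun x (hx : s k < f x) => (hts k).trans hx)
      filter_upwards [ae_all_iff.2 this] with x hx hxU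
      obtain ⟨k, hk⟩ := Set.mem_iUnion.1 hxU
      exact hx k hk
    · rw [indMap_vol hT (level_memLn hf ht)]; exact hvU
    · rw [indMap_vol hT (level_memLn hf ht)]; exact hf.2.2 t ht
  exact h2.symm.trans h1

lemma sd_tri {n : ℕ} (A B C : Set (Euc n)) :
    volume (sd A C) ≤ volume (sd A B) + volume (sd B C) := by
  refine (measure_mono ?_).trans (measure_union_le _ _)
  intro x hx
  simp only [sd, Set.mem_union, Set.mem_diff] at hx ⊢
  tauto

lemma sd_comm' {n : ℕ} (A B : Set (Euc n)) : sd A B = sd B A := Set.union_comm _ _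

lemma sd_congr {n : ℕ} {A A' B B' : Set (Euc n)} (h : A =ᵐ[volume] A') (h' : B =ᵐ[volume] B') :
    volume (sd A B) = volume (sd A' B') :=
  measure_congr ((h.diff h').union (h'.diff h))

lemma sd_contr {n : ℕ} {T : (Euc n → ℝ) → Euc n → ℝ} (hT : IsRearrangement T)
    {A K : Set (Euc n)} (hA : memLn A) (hK : memLn K) (hKA : K ⊆ A) :
    volume (sd (indMap T A) (indMap T K)) ≤ volume (A \ K) := by
  have hle := indMap_mono hT hK hA (HasSubset.Subset.eventuallyLE hKA)
  have h0 : volume (indMap T K \ indMap T A) = 0 := ae_le_set.1 hle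
  have e1 : volume (indMap T A ∩ indMap T K) = volume K := by
    rw [← indMap_vol hT hK]
    refine measure_congr ?_
    filter_upwards [hle] with x hx
    exact propext ⟨fun h => h.2, fun h => ⟨hx h, h⟩⟩
  have e2 := measure_inter_add_sdiff (μ := (volume : Measure (Euc n))) (indMap T A) (indMap_meas hT hK)
  have e3 := measure_inter_add_sdiff (μ := (volume : Measure (Euc n))) A hK.1
  rw [Set.inter_eq_self_of_subset_right hKA] at e3
  rw [e1, indMap_vol hT hA, ← e3] at e2
  have e4 := (ENNReal.add_right_inj hK.2).1 e2
  calc _ ≤ _ := measure_union_le _ _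
    _ = _ := by rw [h0, e4, add_zero]

lemma memCn_memLn {n : ℕ} {K : Set (Euc n)} (hK : memCn K) : memLn K :=
  ⟨hK.1.measurableSet, hK.1.measure_lt_top.ne⟩

lemma sd_core {n : ℕ} {R T : (Euc n → ℝ) → Euc n → ℝ} (hR : IsRearrangement R)
    (hT : IsRearrangement T) {A K : Set (Euc n)} (hA : memLn A) (hK : memLn K) (hKA : K ⊆ A) :
    volume (sd (indMap R A) (indMap T A)) ≤
      volume (A \ K) + (volume (sd (indMap R K) (indMap T K)) + volume (A \ K)) := by
  refine (sd_tri _ (indMap R K) _).trans (add_le_add (sd_contr hR hA hK hKA) ?_)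
  refine (sd_tri _ (indMap T K) _).trans (add_le_add le_rfl ?_)
  rw [sd_comm']
  exact sd_contr hT hA hK hKA

lemma sd_null {n : ℕ} {R T : (Euc n → ℝ) → Euc n → ℝ} (hR : IsRearrangement R)
    (hT : IsRearrangement T) {A : Set (Euc n)} (hA : memLn A) (h0 : volume A = 0) :
    volume (sd (indMap R A) (indMap T A)) = 0 := by
  refine measure_union_null (measure_mono_null Set.diff_subset ?_)
    (measure_mono_null Set.diff_subset ?_)
  · rw [indMap_vol hR hA, h0]
  · rw [indMap_vol hT hA, h0]

lemma exists_cpt {n : ℕ} {A : Set (Euc n)} (hA : memLn A) (h0 : volume A ≠ 0)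
    {ε : ℝ≥0∞} (hε : 0 < ε) : ∃ K, K ⊆ A ∧ memCn K ∧ volume (A \ K) < ε := by
  have hne : min ε (volume A) ≠ 0 := (lt_min hε (pos_iff_ne_zero.2 h0)).ne'
  obtain ⟨K, hKA, hK, hv⟩ := hA.1.exists_isCompact_sdiff_lt hA.2 hne
  refine ⟨K, hKA, ⟨hK, ?_⟩, hv.trans_le (min_le_left _ _)⟩
  by_contra h
  rw [Set.not_nonempty_iff_eq_empty] at h
  rw [h, Set.diff_empty] at hv
  exact absurd (hv.trans_le (min_le_right _ _)) (lt_irrefl _)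

lemma third {ε : ℝ≥0∞} : ε / 3 + (ε / 3 + ε / 3) = ε := by
  rw [← add_assoc]; exact ENNReal.add_thirds ε

lemma equiv_cpt {n : ℕ} {T : (Euc n → ℝ) → Euc n → ℝ} (hT : IsRearrangement T)
    {R : ℕ → (Euc n → ℝ) → Euc n → ℝ} (hR : ∀ k, IsRearrangement (R k)) :
    (∀ A : Set (Euc n), memLn A →
      Tendsto (fun k => volume (sd (indMap (R k) A) (indMap T A))) atTop (𝓝 0)) ↔
    (∀ A : Set (Euc n), memCn A →
      Tendsto (fun k => volume (sd (indMap (R k) A) (indMap T A))) atTop (𝓝 0)) := by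
  refine ⟨fun h A hA => h A (memCn_memLn hA), fun h A hA => ?_⟩
  by_cases h0 : volume A = 0
  · simp only [fun k => sd_null (hR k) hT hA h0]
    exact tendsto_const_nhds
  rw [ENNReal.tendsto_atTop_zero]
  intro ε hε
  have h3 : 0 < ε / 3 := ENNReal.div_pos hε.ne' (by norm_num)
  obtain ⟨K, hKA, hK, hv⟩ := exists_cpt hA h0 h3
  obtain ⟨N, hN⟩ := ENNReal.tendsto_atTop_zero.1 (h K hK) _ h3
  refine ⟨N, fun k hk => (sd_core (hR k) hT hA (memCn_memLn hK) hKA).trans ?_⟩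
  rw [← third (ε := ε)]
  exact add_le_add hv.le (add_le_add (hN k hk) hv.le)

lemma weak_cpt {n : ℕ} {T : (Euc n → ℝ) → Euc n → ℝ} (hT : IsRearrangement T)
    {𝒲 : Set ((Euc n → ℝ) → Euc n → ℝ)} (h𝒲 : ∀ W ∈ 𝒲, IsRearrangement W)
    (h : ∀ A : Set (Euc n), memCn A →
        ∃ S : ℕ → (Euc n → ℝ) → Euc n → ℝ, (∀ k, S k ∈ 𝒲) ∧
          Tendsto (fun k => volume (sd (indMap (S k) A) (indMap T A))) atTop (𝓝 0))
    (A : Set (Euc n)) (hA : memLn A) :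
        ∃ S : ℕ → (Euc n → ℝ) → Euc n → ℝ, (∀ k, S k ∈ 𝒲) ∧
          Tendsto (fun k => volume (sd (indMap (S k) A) (indMap T A))) atTop (𝓝 0) := by
  by_cases h0 : volume A = 0
  · obtain ⟨S, hS, -⟩ := h {0} ⟨isCompact_singleton, Set.singleton_nonempty 0⟩
    refine ⟨S, hS, ?_⟩
    simp only [fun k => sd_null (h𝒲 _ (hS k)) hT hA h0]
    exact tendsto_const_nhds
  have key : ∀ ε : ℝ≥0∞, 0 < ε → ∃ W ∈ 𝒲, volume (sd (indMap W A) (indMap T A)) ≤ ε := by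
    intro ε hε
    have h3 : 0 < ε / 3 := ENNReal.div_pos hε.ne' (by norm_num)
    obtain ⟨K, hKA, hK, hv⟩ := exists_cpt hA h0 h3
    obtain ⟨S, hS, hlim⟩ := h K hK
    obtain ⟨N, hN⟩ := ENNReal.tendsto_atTop_zero.1 hlim _ h3
    refine ⟨S N, hS N, (sd_core (h𝒲 _ (hS N)) hT hA (memCn_memLn hK) hKA).trans ?_⟩
    rw [← third (ε := ε)]
    exact add_le_add hv.le (add_le_add (hN N le_rfl) hv.le)
  choose S hS hS' using fun k : ℕ => key ((k : ℝ≥0∞)⁻¹) (by simp)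
  refine ⟨S, hS, ?_⟩
  exact tendsto_of_tendsto_of_tendsto_of_le_of_le tendsto_const_nhds
    ENNReal.tendsto_inv_nat_nhds_zero (fun _ => zero_le) hS'

/-- sequential compositions -/
lemma comp_rearr {n : ℕ} {U T : (Euc n → ℝ) → Euc n → ℝ} (hU : IsRearrangement U)
    (hT : IsRearrangement T) : IsRearrangement (U ∘ T) := by
  refine ⟨fun f hf => hU.1 _ (hT.1 _ hf), fun f hf t => ?_, fun f g hf hg h => ?_⟩
  · exact (hU.2.1 _ (hT.1 _ hf) t).trans (hT.2.1 _ hf t)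
  · exact hU.2.2 _ _ (hT.1 _ hf) (hT.1 _ hg) (hT.2.2 _ _ hf hg h)

lemma seq_rearr {n : ℕ} {S : ℕ → (Euc n → ℝ) → Euc n → ℝ} (hS : ∀ k, IsRearrangement (S k))
    (k : ℕ) : IsRearrangement (seqComp S k) := by
  induction k with
  | zero => exact hS 0
  | succ k ih => exact comp_rearr (hS (k + 1)) ih

lemma comp_indMap {n : ℕ} {U T : (Euc n → ℝ) → Euc n → ℝ} (hU : IsRearrangement U)
    (hT : IsRearrangement T) {A : Set (Euc n)} (hA : memLn A) :
    indMap (U ∘ T) A =ᵐ[volume] indMap U (indMap T A) := by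
  have h := ind_ae hT hA
  have h1 := hT.1 _ (ind_inV hA one_pos)
  have h2 := ind_inV (indMap_memLn hT hA) one_pos
  have a1 := hU.2.2 _ _ h1 h2 h.le
  have a2 := hU.2.2 _ _ h2 h1 h.symm.le
  filter_upwards [a1, a2] with x b1 b2
  have := le_antisymm b1 b2
  apply propext
  change U (T (ind 1 A)) x = 1 ↔ U (ind 1 (indMap T A)) x = 1
  rw [this]

lemma seq_indMap {n : ℕ} {S : ℕ → (Euc n → ℝ) → Euc n → ℝ} (hS : ∀ k, IsRearrangement (S k))
    {A : Set (Euc n)} (hA : memLn A) (k : ℕ) :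
    memLn (seqComp (fun j => indMap (S j)) k A) ∧
    seqComp (fun j => indMap (S j)) k A =ᵐ[volume] indMap (seqComp S k) A := by
  induction k with
  | zero => exact ⟨indMap_memLn (hS 0) hA, EventuallyEq.rfl⟩
  | succ k ih =>
    refine ⟨indMap_memLn (hS (k + 1)) ih.1, ?_⟩
    refine (indMap_congr (hS (k + 1)) ih.1 (indMap_memLn (seq_rearr hS k) hA) ih.2).trans ?_
    exact (comp_indMap (hS (k + 1)) (seq_rearr hS k) hA).symm

/-- Lp part -/
lemma Lp_inV {n : ℕ} {p : ℝ≥0∞} (hp1 : 1 ≤ p) (hp2 : p ≠ ⊤) {f : Euc n → ℝ}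
    (hf : inLpPlus p f) : inV f := by
  refine ⟨hf.1, hf.2.1, fun t ht => ?_⟩
  have hm : MemLp f p volume := ⟨hf.1.aestronglyMeasurable, hf.2.2.lt_top⟩
  have := hm.meas_ge_lt_top (zero_lt_one.trans_le hp1).ne' hp2 (ε := ⟨t, ht.le⟩)
    (by intro h; exact ht.ne' (congrArg NNReal.toReal h))
  refine ((measure_mono ?_).trans_lt this).ne
  intro x hx
  have hx' : t < f x := hx
  change t ≤ ‖f x‖
  exact hx'.le.trans (le_abs_self _)

lemma ind_Lp {n : ℕ} {p : ℝ≥0∞} (hp1 : 1 ≤ p) (hp2 : p ≠ ⊤) {A : Set (Euc n)}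
    (hA : memLn A) : inLpPlus p (ind 1 A) := by
  refine ⟨(ind_inV hA one_pos).1, (ind_inV hA one_pos).2.1, ?_⟩
  exact (memLp_indicator_const p hA.1 (1:ℝ) (Or.inr hA.2)).2.ne

lemma eLp_ind {n : ℕ} {p : ℝ≥0∞} (hp1 : 1 ≤ p) (hp2 : p ≠ ⊤) {R T : (Euc n → ℝ) → Euc n → ℝ}
    (hR : IsRearrangement R) (hT : IsRearrangement T) {A : Set (Euc n)} (hA : memLn A) :
    eLpNorm (R (ind 1 A) - T (ind 1 A)) p volume ^ p.toReal =
      volume (sd (indMap R A) (indMap T A)) := by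
  have hp0 : p ≠ 0 := (zero_lt_one.trans_le hp1).ne'
  have h : eLpNorm (R (ind 1 A) - T (ind 1 A)) p volume =
      eLpNorm (ind 1 (sd (indMap R A) (indMap T A))) p volume := by
    refine eLpNorm_congr_norm_ae ?_
    filter_upwards [ind_ae hR hA, ind_ae hT hA] with x h1 h2
    rw [Pi.sub_apply, h1, h2]
    by_cases a : x ∈ indMap R A <;> by_cases b : x ∈ indMap T A <;>
      simp [ind, sd, a, b]
  have hm : MeasurableSet (sd (indMap R A) (indMap T A)) :=
    ((indMap_meas hR hA).diff (indMap_meas hT hA)).union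
      ((indMap_meas hT hA).diff (indMap_meas hR hA))
  rw [h, eLpNorm_indicator_const hm hp0 hp2]
  simp only [enorm_one, one_mul]
  rw [← ENNReal.rpow_mul, one_div_mul_cancel (ENNReal.toReal_pos hp0 hp2).ne', ENNReal.rpow_one]

lemma tend_ind {n : ℕ} {p : ℝ≥0∞} (hp1 : 1 ≤ p) (hp2 : p ≠ ⊤) {T : (Euc n → ℝ) → Euc n → ℝ}
    {R : ℕ → (Euc n → ℝ) → Euc n → ℝ}
    (hR : ∀ k, IsRearrangement (R k)) (hT : IsRearrangement T) {A : Set (Euc n)} (hA : memLn A)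
    (h : Tendsto (fun k => eLpNorm (R k (ind 1 A) - T (ind 1 A)) p volume) atTop (𝓝 0)) :
    Tendsto (fun k => volume (sd (indMap (R k) A) (indMap T A))) atTop (𝓝 0) := by
  simp only [← fun k => eLp_ind hp1 hp2 (hR k) hT hA]
  have hp0 : p ≠ 0 := (zero_lt_one.trans_le hp1).ne'
  have := (ENNReal.continuous_rpow_const (y := p.toReal)).tendsto 0
  rw [ENNReal.zero_rpow_of_pos (ENNReal.toReal_pos hp0 hp2)] at this
  exact this.comp h

lemma conv_layer {n : ℕ} {q : ℝ} (hq : 1 ≤ q) {f : Euc n → ℝ} (hf : Measurable f) (hf0 : 0 ≤ f)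
    (hfin : ∫⁻ x, ENNReal.ofReal (f x ^ q) ≠ ⊤) {h : ℕ → Euc n → ℝ}
    (hm : ∀ k, Measurable (h k)) (h0 : ∀ k, 0 ≤ h k)
    (hb : ∀ k t, volume {x | t < h k x} ≤ 2 * volume {x | t < f x})
    (hl : ∀ t : ℝ, 0 < t →
      Tendsto (fun k => volume {x | t < h k x}) atTop (𝓝 (volume {x | t < f x}))) :
    Tendsto (fun k => ∫⁻ x, ENNReal.ofReal (h k x ^ q)) atTop
      (𝓝 (∫⁻ x, ENNReal.ofReal (f x ^ q))) := by
  have hq0 : 0 < q := by linarith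
  have hL := lintegral_rpow_eq_lintegral_meas_lt_mul volume (ae_of_all _ hf0) hf.aemeasurable hq0
  have hLk := fun k => lintegral_rpow_eq_lintegral_meas_lt_mul volume (ae_of_all _ (h0 k))
    (hm k).aemeasurable hq0
  simp only [hLk]
  rw [hL] at hfin ⊢
  have hqn : ENNReal.ofReal q ≠ 0 := by simpa using hq0
  have hfin' : ∫⁻ t in Set.Ioi (0:ℝ), volume {a | t < f a} * ENNReal.ofReal (t ^ (q - 1)) ≠ ⊤ := by
    intro h
    rw [h, ENNReal.mul_top hqn] at hfin
    exact hfin rfl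
  refine ENNReal.Tendsto.const_mul ?_ (Or.inr ENNReal.ofReal_ne_top)
  have hanti : ∀ g : Euc n → ℝ, Measurable fun t : ℝ => volume {x | t < g x} := fun g => by
    refine Antitone.measurable fun s t hst => measure_mono fun x hx => ?_
    exact lt_of_le_of_lt hst hx
  have hpow : Measurable fun t : ℝ => ENNReal.ofReal (t ^ (q - 1)) := by fun_prop
  refine tendsto_lintegral_of_dominated_convergence
    (fun t => 2 * (volume {a | t < f a} * ENNReal.ofReal (t ^ (q - 1))))
    (fun k => (hanti (h k)).mul hpow) (fun k => ae_of_all _ fun t => ?_) ?_ ?_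
  · simp only
    rw [← mul_assoc]
    exact mul_le_mul_left (hb k t) _
  · rw [lintegral_const_mul' _ _ (by norm_num)]
    exact ENNReal.mul_ne_top (by norm_num) hfin'
  · refine (ae_restrict_iff' measurableSet_Ioi).2 (ae_of_all _ fun t ht => ?_)
    exact ENNReal.Tendsto.mul_const (hl t ht) (Or.inr ENNReal.ofReal_ne_top)

lemma tend_Lp {n : ℕ} {p : ℝ≥0∞} (hp1 : 1 ≤ p) (hp2 : p ≠ ⊤) {T : (Euc n → ℝ) → Euc n → ℝ}
    {R : ℕ → (Euc n → ℝ) → Euc n → ℝ}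
    (hR : ∀ k, IsRearrangement (R k)) (hT : IsRearrangement T)
    (h : ∀ A : Set (Euc n), memLn A →
      Tendsto (fun k => volume (sd (indMap (R k) A) (indMap T A))) atTop (𝓝 0))
    {f : Euc n → ℝ} (hf : inLpPlus p f) :
    Tendsto (fun k => eLpNorm (R k f - T f) p volume) atTop (𝓝 0) := by
  have hp0 : p ≠ 0 := (zero_lt_one.trans_le hp1).ne'
  have hfV := Lp_inV hp1 hp2 hf
  set q := p.toReal with hqdef
  have hq0 : 0 < q := ENNReal.toReal_pos hp0 hp2
  have hq : 1 ≤ q := by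
    have := ENNReal.toReal_mono hp2 hp1
    simpa using this
  have hgm := (hT.1 f hfV).1
  have hg0 := (hT.1 f hfV).2.1
  have hkm := fun k => ((hR k).1 f hfV).1
  have hk0 := fun k => ((hR k).1 f hfV).2.1
  have hfin : ∫⁻ x, ENNReal.ofReal (f x ^ q) ≠ ⊤ := by
    have := hf.2.2
    rw [eLpNorm_eq_lintegral_rpow_enorm_toReal hp0 hp2, ← hqdef] at this
    have h2 : ∫⁻ x, ‖f x‖ₑ ^ q ≠ ⊤ := by
      intro h
      rw [h, ENNReal.top_rpow_of_pos (by positivity)] at this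
      exact this rfl
    convert h2 using 3 with x
    rw [Real.enorm_of_nonneg (hf.2.1 x), ENNReal.ofReal_rpow_of_nonneg (hf.2.1 x) hq0.le]
  have hsd : ∀ t : ℝ, 0 < t →
      Tendsto (fun k => volume (sd {x | t < R k f x} {x | t < T f x})) atTop (𝓝 0) := by
    intro t ht
    refine (h _ (level_memLn hfV ht)).congr fun k => ?_
    exact sd_congr (indMap_level (hR k) hfV ht) (indMap_level hT hfV ht)
  have hvT := hT.2.1 f hfV
  have hvR := fun k => (hR k).2.1 f hfV
  have hmax : Tendsto (fun k => ∫⁻ x, ENNReal.ofReal (max (R k f x) (T f x) ^ q)) atTop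
      (𝓝 (∫⁻ x, ENNReal.ofReal (f x ^ q))) := by
    have hset : ∀ k t, {x | t < max (R k f x) (T f x)} = {x | t < R k f x} ∪ {x | t < T f x} := by
      intro k t; ext x; simp [lt_max_iff]
    refine conv_layer hq hf.1 hf.2.1 hfin (fun k => (hkm k).max hgm)
      (fun k x => le_max_of_le_left (hk0 k x)) (fun k t => ?_) (fun t ht => ?_)
    · rw [hset, two_mul]
      refine (measure_union_le _ _).trans ?_
      rw [hvT, hvR]
    · have hup : Tendsto (fun k => volume {x | t < f x} +
          volume (sd {x | t < R k f x} {x | t < T f x})) atTop (𝓝 (volume {x | t < f x})) := by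
        simpa using (hsd t ht).const_add (volume {x | t < f x})
      refine tendsto_of_tendsto_of_tendsto_of_le_of_le tendsto_const_nhds hup
        (fun k => ?_) (fun k => ?_)
      · simp only [hset]
        rw [← hvT]
        exact measure_mono Set.subset_union_right
      · simp only [hset]
        rw [← hvT]
        refine (measure_mono ?_).trans (measure_union_le _ _)
        intro x hx
        simp only [sd, Set.mem_union, Set.mem_diff] at hx ⊢
        tauto
  have hmin : Tendsto (fun k => ∫⁻ x, ENNReal.ofReal (min (R k f x) (T f x) ^ q)) atTop
      (𝓝 (∫⁻ x, ENNReal.ofReal (f x ^ q))) := by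
    have hset : ∀ k t, {x | t < min (R k f x) (T f x)} = {x | t < R k f x} ∩ {x | t < T f x} := by
      intro k t; ext x; simp [lt_min_iff]
    have hle : ∀ k t, volume {x | t < min (R k f x) (T f x)} ≤ volume {x | t < f x} := by
      intro k t
      rw [hset, ← hvT]
      exact measure_mono Set.inter_subset_right
    refine conv_layer hq hf.1 hf.2.1 hfin (fun k => (hkm k).min hgm)
      (fun k x => le_min (hk0 k x) (hg0 x)) (fun k t => ?_) (fun t ht => ?_)
    · rw [two_mul]
      exact (hle k t).trans le_self_add
    · have hup : Tendsto (fun k => volume {x | t < f x} -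
          volume (sd {x | t < R k f x} {x | t < T f x})) atTop (𝓝 (volume {x | t < f x})) := by
        simpa using ENNReal.Tendsto.sub (tendsto_const_nhds (x := volume {x | t < f x})) (hsd t ht)
          (Or.inr (by simp))
      refine tendsto_of_tendsto_of_tendsto_of_le_of_le hup tendsto_const_nhds
        (fun k => ?_) (fun k => hle k t)
      simp only [hset]
      rw [← hvT, tsub_le_iff_right]
      refine (measure_mono ?_).trans (measure_union_le _ _)
      intro x hx
      simp only [sd, Set.mem_union, Set.mem_diff, Set.mem_inter_iff]
      tauto
  have hminfin : ∀ k, ∫⁻ x, ENNReal.ofReal (min (R k f x) (T f x) ^ q) ≠ ⊤ := by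
    intro k
    have hL := lintegral_rpow_eq_lintegral_meas_lt_mul volume (ae_of_all _ hf.2.1)
      hf.1.aemeasurable hq0
    have hL' := lintegral_rpow_eq_lintegral_meas_lt_mul volume (ae_of_all _ hg0)
      hgm.aemeasurable hq0
    simp only [hvT] at hL'
    rw [← hL] at hL'
    refine ((lintegral_mono fun x => ?_).trans_lt (hL'.trans_lt hfin.lt_top)).ne
    exact ENNReal.ofReal_le_ofReal
      (Real.rpow_le_rpow (le_min (hk0 k x) (hg0 x)) (min_le_right _ _) hq0.le)
  have hbound : ∀ k, ∫⁻ x, ‖(R k f - T f) x‖ₑ ^ q ≤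
      (∫⁻ x, ENNReal.ofReal (max (R k f x) (T f x) ^ q)) -
        ∫⁻ x, ENNReal.ofReal (min (R k f x) (T f x) ^ q) := by
    intro k
    refine ENNReal.le_sub_of_add_le_right (hminfin k) ?_
    rw [← lintegral_add_right _ (((hkm k).min hgm).pow_const q).ennreal_ofReal]
    refine lintegral_mono fun x => ?_
    have hmn : 0 ≤ min (R k f x) (T f x) := le_min (hk0 k x) (hg0 x)
    have hmx : 0 ≤ max (R k f x) (T f x) := le_max_of_le_left (hk0 k x)
    simp only [Pi.sub_apply]
    rw [← ENNReal.ofReal_rpow_of_nonneg hmn hq0.le, ← ENNReal.ofReal_rpow_of_nonneg hmx hq0.le]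
    refine (ENNReal.add_rpow_le_rpow_add _ _ hq).trans (le_of_eq ?_)
    congr 1
    rw [← ofReal_norm_eq_enorm, ← ENNReal.ofReal_add (norm_nonneg _) hmn, Real.norm_eq_abs,
      ← max_sub_min_eq_abs']
    congr 1
    ring
  have hlim : Tendsto (fun k => ∫⁻ x, ‖(R k f - T f) x‖ₑ ^ q) atTop (𝓝 0) := by
    have := ENNReal.Tendsto.sub hmax hmin (Or.inl hfin)
    rw [tsub_self] at this
    exact tendsto_of_tendsto_of_tendsto_of_le_of_le tendsto_const_nhds this
      (fun _ => zero_le) hbound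
  simp only [eLpNorm_eq_lintegral_rpow_enorm_toReal hp0 hp2, ← hqdef]
  have := (ENNReal.continuous_rpow_const (y := 1 / q)).tendsto 0
  rw [ENNReal.zero_rpow_of_pos (by positivity)] at this
  exact this.comp hlim

/-- Theorem 5.2: for a rearrangement `T` and a family `𝒲` of rearrangements, `T` is
(resp. sequentially) approximable in `Lᵖ` on `L^p_+(ℝⁿ)` by maps in `𝒲` iff `∂_T` is
(resp. sequentially) approximable on `𝓛ⁿ` by the induced set maps, iff the same holds on
`𝒞ⁿ`; moreover the implication (i) ⇒ (ii) ⇔ (iii) holds for weak approximability. -/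
theorem stmt18 {n : ℕ} (p : ℝ≥0∞) (hp1 : 1 ≤ p) (hp2 : p ≠ ⊤)
    (T : (Euc n → ℝ) → Euc n → ℝ) (hT : IsRearrangement T)
    (𝒲 : Set ((Euc n → ℝ) → Euc n → ℝ)) (h𝒲 : ∀ W ∈ 𝒲, IsRearrangement W) :
    ((∃ S : ℕ → (Euc n → ℝ) → Euc n → ℝ, (∀ k, S k ∈ 𝒲) ∧
        ∀ f : Euc n → ℝ, inLpPlus p f →
          Tendsto (fun k => eLpNorm (S k f - T f) p volume) atTop (𝓝 0)) ↔
      (∃ S : ℕ → (Euc n → ℝ) → Euc n → ℝ, (∀ k, S k ∈ 𝒲) ∧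
        ∀ A : Set (Euc n), memLn A →
          Tendsto (fun k => volume (sd (indMap (S k) A) (indMap T A))) atTop (𝓝 0))) ∧
    ((∃ S : ℕ → (Euc n → ℝ) → Euc n → ℝ, (∀ k, S k ∈ 𝒲) ∧
        ∀ A : Set (Euc n), memLn A →
          Tendsto (fun k => volume (sd (indMap (S k) A) (indMap T A))) atTop (𝓝 0)) ↔
      (∃ S : ℕ → (Euc n → ℝ) → Euc n → ℝ, (∀ k, S k ∈ 𝒲) ∧
        ∀ A : Set (Euc n), memCn A →
          Tendsto (fun k => volume (sd (indMap (S k) A) (indMap T A))) atTop (𝓝 0))) ∧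
    ((∃ S : ℕ → (Euc n → ℝ) → Euc n → ℝ, (∀ k, S k ∈ 𝒲) ∧
        ∀ f : Euc n → ℝ, inLpPlus p f →
          Tendsto (fun k => eLpNorm (seqComp S k f - T f) p volume) atTop (𝓝 0)) ↔
      (∃ S : ℕ → (Euc n → ℝ) → Euc n → ℝ, (∀ k, S k ∈ 𝒲) ∧
        ∀ A : Set (Euc n), memLn A →
          Tendsto (fun k => volume (sd (seqComp (fun j => indMap (S j)) k A)
            (indMap T A))) atTop (𝓝 0))) ∧
    ((∃ S : ℕ → (Euc n → ℝ) → Euc n → ℝ, (∀ k, S k ∈ 𝒲) ∧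
        ∀ A : Set (Euc n), memLn A →
          Tendsto (fun k => volume (sd (seqComp (fun j => indMap (S j)) k A)
            (indMap T A))) atTop (𝓝 0)) ↔
      (∃ S : ℕ → (Euc n → ℝ) → Euc n → ℝ, (∀ k, S k ∈ 𝒲) ∧
        ∀ A : Set (Euc n), memCn A →
          Tendsto (fun k => volume (sd (seqComp (fun j => indMap (S j)) k A)
            (indMap T A))) atTop (𝓝 0))) ∧
    (((∀ f : Euc n → ℝ, inLpPlus p f →
        ∃ S : ℕ → (Euc n → ℝ) → Euc n → ℝ, (∀ k, S k ∈ 𝒲) ∧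
          Tendsto (fun k => eLpNorm (S k f - T f) p volume) atTop (𝓝 0)) →
      (∀ A : Set (Euc n), memLn A →
        ∃ S : ℕ → (Euc n → ℝ) → Euc n → ℝ, (∀ k, S k ∈ 𝒲) ∧
          Tendsto (fun k => volume (sd (indMap (S k) A) (indMap T A))) atTop (𝓝 0))) ∧
      ((∀ A : Set (Euc n), memLn A →
        ∃ S : ℕ → (Euc n → ℝ) → Euc n → ℝ, (∀ k, S k ∈ 𝒲) ∧
          Tendsto (fun k => volume (sd (indMap (S k) A) (indMap T A))) atTop (𝓝 0)) ↔
      (∀ A : Set (Euc n), memCn A →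
        ∃ S : ℕ → (Euc n → ℝ) → Euc n → ℝ, (∀ k, S k ∈ 𝒲) ∧
          Tendsto (fun k => volume (sd (indMap (S k) A) (indMap T A))) atTop (𝓝 0)))) := by
  have hseq : ∀ S : ℕ → (Euc n → ℝ) → Euc n → ℝ, (∀ k, S k ∈ 𝒲) → ∀ A : Set (Euc n), memLn A →
      (fun k => volume (sd (seqComp (fun j => indMap (S j)) k A) (indMap T A))) =
      (fun k => volume (sd (indMap (seqComp S k) A) (indMap T A))) := by
    intro S hS A hA
    funext k
    exact sd_congr (seq_indMap (fun j => h𝒲 _ (hS j)) hA k).2 EventuallyEq.rfl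
  refine ⟨⟨?_, ?_⟩, ?_, ⟨?_, ?_⟩, ?_, ?_, ?_, ?_⟩
  · rintro ⟨S, hS, h⟩
    exact ⟨S, hS, fun A hA => tend_ind hp1 hp2 (fun k => h𝒲 _ (hS k)) hT hA
      (h _ (ind_Lp hp1 hp2 hA))⟩
  · rintro ⟨S, hS, h⟩
    exact ⟨S, hS, fun f hf => tend_Lp hp1 hp2 (fun k => h𝒲 _ (hS k)) hT h hf⟩
  · exact exists_congr fun S => and_congr_right fun hS => equiv_cpt hT fun k => h𝒲 _ (hS k)
  · rintro ⟨S, hS, h⟩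
    refine ⟨S, hS, fun A hA => ?_⟩
    rw [hseq S hS A hA]
    exact tend_ind hp1 hp2 (seq_rearr fun k => h𝒲 _ (hS k)) hT hA (h _ (ind_Lp hp1 hp2 hA))
  · rintro ⟨S, hS, h⟩
    refine ⟨S, hS, fun f hf => ?_⟩
    refine tend_Lp hp1 hp2 (seq_rearr fun k => h𝒲 _ (hS k)) hT (fun A hA => ?_) hf
    rw [← hseq S hS A hA]
    exact h A hA
  · refine exists_congr fun S => and_congr_right fun hS => ?_
    refine Iff.trans ?_ ((equiv_cpt hT (seq_rearr fun k => h𝒲 _ (hS k))).trans ?_)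
    · exact forall₂_congr fun A hA => by rw [hseq S hS A hA]
    · exact forall₂_congr fun A hA => by rw [hseq S hS A (memCn_memLn hA)]
  · intro h A hA
    obtain ⟨S, hS, h'⟩ := h _ (ind_Lp hp1 hp2 hA)
    exact ⟨S, hS, tend_ind hp1 hp2 (fun k => h𝒲 _ (hS k)) hT hA h'⟩
  · exact fun h A hA => h A (memCn_memLn hA)
  · exact fun h => weak_cpt hT h𝒲 h
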